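/- Let G be a connected P5-free finite simple graph admitting a proper perfect edge dominating set P with associated 3-coloring (B,Y,W). Then there exist vertices v1, v2, v3 of G such that v1v2 and v2v3 are edges, v1v3 is a non-edge, {v1,v2,v3} is a dominating set of G, and the triple of colors (c(v1), c(v2), c(v3)) with respect to (B,Y,W) is one of: (B,B,Y), (Y,B,B), (B,Y,W), (W,Y,B), (Y,B,Y), (W,Y,W), (Y,W,Y). -/

import Mathlib

/-- An edge `e` dominates an edge `f` if they share an endpoint (in particular,
every edge dominates itself). -/
def edgeDom {V : Type*} (e f : Sym2 V) : Prop := ∃ v, v ∈ e ∧ v ∈ f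

/-- `P` is a perfect edge dominating set of `G`: `P ⊆ E(G)` and every edge of `G`
not in `P` is dominated by exactly one edge of `P`. -/
def IsPEDS {V : Type*} (G : SimpleGraph V) (P : Set (Sym2 V)) : Prop :=
  P ⊆ G.edgeSet ∧ ∀ f ∈ G.edgeSet, f ∉ P → ∃! e, e ∈ P ∧ edgeDom e f

/-- A black vertex: incident to at least two edges of `P`. -/
def Blackv {V : Type*} (P : Set (Sym2 V)) (v : V) : Prop :=
  ∃ e ∈ P, ∃ f ∈ P, e ≠ f ∧ v ∈ e ∧ v ∈ f

/-- A yellow vertex: incident to exactly one edge of `P`. -/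
def Yellowv {V : Type*} (P : Set (Sym2 V)) (v : V) : Prop := ∃! e, e ∈ P ∧ v ∈ e

/-- A white vertex: incident to no edge of `P`. -/
def Whitev {V : Type*} (P : Set (Sym2 V)) (v : V) : Prop := ∀ e ∈ P, v ∉ e


/-- `D` is a (vertex) dominating set of `G`. -/
def IsDominating {V : Type*} (G : SimpleGraph V) (D : Set V) : Prop :=
  ∀ v : V, v ∈ D ∨ ∃ u ∈ D, G.Adj u v

/-- A graph is `P₅`-free if it contains no induced subgraph isomorphic to the
path on `5` vertices. -/
def P5Free {V : Type*} (G : SimpleGraph V) : Prop :=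
  IsEmpty (SimpleGraph.pathGraph 5 ↪g G)

/-! An induced path `b y w` coloured (black, yellow, white) almost dominates a connected `P₅`-free
graph. Since any two vertices are joined by a walk of length at most three, every white vertex
ends such a path, and so `P₅`-freeness makes `b` adjacent to every other black vertex and `w` to
every yellow neighbour of a black vertex other than `b`. What can be missed are white vertices and
yellow vertices matched to yellow ones. The white neighbourhoods of the yellow vertices next to a
black one form a chain, so the largest of them contains all white vertices, which fixes `y`; the
neighbourhoods of the white vertices among the yellow vertices matched to yellow ones also form a
chain, and the largest of them fixes `w`. -/

section

variable {V : Type*} {G : SimpleGraph V}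

namespace P5Free

theorem false_of_induced_path (hfree : P5Free G) {a b c d e : V}
    (hab : G.Adj a b) (hbc : G.Adj b c) (hcd : G.Adj c d) (hde : G.Adj d e)
    (hac : ¬G.Adj a c) (had : ¬G.Adj a d) (hae : ¬G.Adj a e)
    (hbd : ¬G.Adj b d) (hbe : ¬G.Adj b e) (hce : ¬G.Adj c e) : False := by
  have hsymm : ∀ x y, G.Adj x y → G.Adj y x := fun _ _ h => h.symm
  have hadj : ∀ i j : Fin 5, G.Adj (![a, b, c, d, e] i) (![a, b, c, d, e] j) ↔
      (SimpleGraph.pathGraph 5).Adj i j := by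
    intro i j
    rw [SimpleGraph.pathGraph_adj]
    fin_cases i <;> fin_cases j <;> simp <;> grind
  have hinj : Function.Injective ![a, b, c, d, e] := by
    intro i j
    fin_cases i <;> fin_cases j <;> simp <;> grind
  exact hfree.false ⟨⟨_, hinj⟩, hadj _ _⟩

open SimpleGraph.Walk in
theorem exists_walk_length_le_three (hfree : P5Free G) {u v : V} (huv : G.Reachable u v) :
    ∃ p : G.Walk u v, p.length ≤ 3 := by
  obtain ⟨p, hp⟩ := huv.exists_walk_length_eq_dist
  have hmin : ∀ q : G.Walk u v, p.length ≤ q.length := fun q => hp ▸ SimpleGraph.dist_le q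
  match p, hmin with
  | nil, _ => exact ⟨nil, by simp⟩
  | cons h₁ nil, _ => exact ⟨cons h₁ nil, by simp⟩
  | cons h₁ (cons h₂ nil), _ => exact ⟨cons h₁ (cons h₂ nil), by simp⟩
  | cons h₁ (cons h₂ (cons h₃ nil)), _ => exact ⟨cons h₁ (cons h₂ (cons h₃ nil)), by simp⟩
  | cons h₁ (cons h₂ (cons h₃ (cons h₄ q))), hmin =>
    -- A chord among the first five vertices would shorten the walk.
    refine (hfree.false_of_induced_path h₁ h₂ h₃ h₄ ?_ ?_ ?_ ?_ ?_ ?_).elim <;> intro h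
    · simpa using hmin (cons h (cons h₃ (cons h₄ q)))
    · simpa using hmin (cons h (cons h₄ q))
    · exact absurd (hmin (cons h q)) (by simp only [length_cons]; lia)
    · simpa using hmin (cons h₁ (cons h (cons h₄ q)))
    · simpa using hmin (cons h₁ (cons h q))
    · simpa using hmin (cons h₁ (cons h₂ (cons h q)))

theorem exists_adj_adj_of_not_adj (hfree : P5Free G) {u v : V} (huv : G.Reachable u v)
    (hne : u ≠ v) (hadj : ¬G.Adj u v) :
    ∃ x z, G.Adj u x ∧ (x = z ∨ G.Adj x z) ∧ G.Adj z v := by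
  obtain ⟨p, hp⟩ := hfree.exists_walk_length_le_three huv
  match p, hp with
  | .nil, _ => exact absurd rfl hne
  | .cons h₁ .nil, _ => exact absurd h₁ hadj
  | .cons h₁ (.cons h₂ .nil), _ => exact ⟨_, _, h₁, Or.inl rfl, h₂⟩
  | .cons h₁ (.cons h₂ (.cons h₃ .nil)), _ => exact ⟨_, _, h₁, Or.inr h₂, h₃⟩

end P5Free

variable {P : Set (Sym2 V)}

theorem Blackv.not_whitev {v : V} : Blackv P v → ¬Whitev P v := by
  rintro ⟨e, he, _, _, _, hve, _⟩ hw
  exact hw e he hve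

theorem Blackv.not_yellowv {v : V} : Blackv P v → ¬Yellowv P v := by
  rintro ⟨e, he, f, hf, hef, hve, hvf⟩ hy
  exact hef (hy.unique ⟨he, hve⟩ ⟨hf, hvf⟩)

theorem Yellowv.not_whitev {v : V} : Yellowv P v → ¬Whitev P v := by
  rintro ⟨e, ⟨he, hve⟩, _⟩ hw
  exact hw e he hve

theorem not_whitev_iff_exists_mem {v : V} : ¬Whitev P v ↔ ∃ e ∈ P, v ∈ e := by
  simp [Whitev]

theorem blackv_or_yellowv_of_not_whitev {v : V} (hv : ¬Whitev P v) :
    Blackv P v ∨ Yellowv P v := by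
  obtain ⟨e, he, hve⟩ := not_whitev_iff_exists_mem.1 hv
  refine or_iff_not_imp_left.2 fun hb => ⟨e, ⟨he, hve⟩, fun f ⟨hf, hvf⟩ => ?_⟩
  by_contra hne
  exact hb ⟨f, hf, e, he, hne, hvf, hve⟩

namespace IsPEDS

theorem mem_of_adj_of_blackv (hP : IsPEDS G P) {u v : V} (huv : G.Adj u v) (hu : Blackv P u) :
    s(u, v) ∈ P := by
  obtain ⟨e, he, f, hf, hef, hue, huf⟩ := hu
  by_contra hmem
  exact hef ((hP.2 _ huv hmem).unique ⟨he, u, hue, Sym2.mem_mk_left u v⟩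
    ⟨hf, u, huf, Sym2.mem_mk_left u v⟩)

theorem mem_of_adj_of_not_whitev (hP : IsPEDS G P) {u v : V} (huv : G.Adj u v)
    (hu : ¬Whitev P u) (hv : ¬Whitev P v) : s(u, v) ∈ P := by
  obtain ⟨e, he, hue⟩ := not_whitev_iff_exists_mem.1 hu
  obtain ⟨f, hf, hvf⟩ := not_whitev_iff_exists_mem.1 hv
  by_contra hmem
  have hef : e = f := (hP.2 _ huv hmem).unique ⟨he, u, hue, Sym2.mem_mk_left u v⟩
    ⟨hf, v, hvf, Sym2.mem_mk_right u v⟩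
  have he_eq : e = s(u, v) := (Sym2.mem_and_mem_iff huv.ne).1 ⟨hue, hef ▸ hvf⟩
  exact hmem (he_eq ▸ he)

theorem not_whitev_of_adj_blackv (hP : IsPEDS G P) {u v : V} (huv : G.Adj u v)
    (hu : Blackv P u) : ¬Whitev P v :=
  fun hv => hv _ (hP.mem_of_adj_of_blackv huv hu) (Sym2.mem_mk_right u v)

theorem not_adj_of_blackv_of_whitev (hP : IsPEDS G P) {u v : V} (hu : Blackv P u)
    (hv : Whitev P v) : ¬G.Adj u v :=
  fun huv => hP.not_whitev_of_adj_blackv huv hu hv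

theorem not_adj_of_whitev (hP : IsPEDS G P) {u v : V} (hu : Whitev P u) (hv : Whitev P v) :
    ¬G.Adj u v := by
  intro huv
  obtain ⟨e, ⟨he, x, hxe, hx⟩, _⟩ :=
    hP.2 s(u, v) huv fun hmem => hu _ hmem (Sym2.mem_mk_left u v)
  rcases Sym2.mem_iff.1 hx with rfl | rfl
  · exact hu e he hxe
  · exact hv e he hxe

theorem yellowv_of_adj_whitev (hP : IsPEDS G P) {u v : V} (huv : G.Adj u v)
    (hv : Whitev P v) : Yellowv P u := by
  have hu : ¬Whitev P u := fun hu => hP.not_adj_of_whitev hu hv huv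
  exact (blackv_or_yellowv_of_not_whitev hu).resolve_left
    fun hb => hP.not_adj_of_blackv_of_whitev hb hv huv

theorem eq_of_adj_yellowv (hP : IsPEDS G P) {y u v : V} (hy : Yellowv P y)
    (hyu : G.Adj y u) (hyv : G.Adj y v) (hu : ¬Whitev P u) (hv : ¬Whitev P v) : u = v :=
  Sym2.congr_right.1 <| hy.unique
    ⟨hP.mem_of_adj_of_not_whitev hyu hy.not_whitev hu, Sym2.mem_mk_left y u⟩
    ⟨hP.mem_of_adj_of_not_whitev hyv hy.not_whitev hv, Sym2.mem_mk_left y v⟩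

theorem exists_adj_not_whitev (hP : IsPEDS G P) {v : V} (hv : ¬Whitev P v) :
    ∃ u, G.Adj v u ∧ ¬Whitev P u := by
  obtain ⟨e, he, u, rfl⟩ := not_whitev_iff_exists_mem.1 hv
  exact ⟨u, hP.1 he, not_whitev_iff_exists_mem.2 ⟨_, he, Sym2.mem_mk_right v u⟩⟩

end IsPEDS

/-- A path `b y w` whose vertices are black, yellow and white, in this order. Non-adjacency of `b`
and `w` is not a field, because it holds for every perfect edge dominating set `P`. -/
structure IsBYWPath (G : SimpleGraph V) (P : Set (Sym2 V)) (b y w : V) : Prop where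
  black : Blackv P b
  yellow : Yellowv P y
  white : Whitev P w
  adj_left : G.Adj b y
  adj_right : G.Adj y w

/-- A yellow vertex with a yellow neighbour. For a perfect edge dominating set `P` this says that
the edge of `P` at `p` joins it to another yellow vertex, rather than to a black one. -/
def IsPairedYellow (G : SimpleGraph V) (P : Set (Sym2 V)) (p : V) : Prop :=
  Yellowv P p ∧ ∃ q, Yellowv P q ∧ G.Adj p q

namespace IsPEDS

theorem exists_isBYWPath (hP : IsPEDS G P) (hfree : P5Free G) {b w : V}
    (hbw : G.Reachable b w) (hb : Blackv P b) (hw : Whitev P w) :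
    ∃ b' y, (b' = b ∨ G.Adj b b') ∧ IsBYWPath G P b' y w := by
  have hne : b ≠ w := fun h => hb.not_whitev (h ▸ hw)
  obtain ⟨x, y, hbx, hxy, hyw⟩ :=
    hfree.exists_adj_adj_of_not_adj hbw hne (hP.not_adj_of_blackv_of_whitev hb hw)
  have hy : Yellowv P y := hP.yellowv_of_adj_whitev hyw hw
  rcases hxy with rfl | hxy
  · exact ⟨b, x, Or.inl rfl, hb, hy, hw, hbx, hyw⟩
  rcases blackv_or_yellowv_of_not_whitev (hP.not_whitev_of_adj_blackv hbx hb) with hx | hx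
  · exact ⟨x, y, Or.inr hbx, hx, hy, hw, hxy, hyw⟩
  · have hby : b = y := hP.eq_of_adj_yellowv hx hbx.symm hxy hb.not_whitev hy.not_whitev
    exact absurd (hby ▸ hy) hb.not_yellowv

theorem not_adj_of_blackv_of_isPairedYellow (hP : IsPEDS G P) {b p : V} (hb : Blackv P b)
    (hp : IsPairedYellow G P p) : ¬G.Adj b p := by
  intro hbp
  obtain ⟨hp, q, hq, hpq⟩ := hp
  have hbq : b = q := hP.eq_of_adj_yellowv hp hbp.symm hpq hb.not_whitev hq.not_whitev
  exact hb.not_yellowv (hbq ▸ hq)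

theorem exists_whitev_adj_of_isPairedYellow (hP : IsPEDS G P) (hfree : P5Free G) {b p : V}
    (hbp : G.Reachable b p) (hb : Blackv P b) (hp : IsPairedYellow G P p) :
    ∃ w, Whitev P w ∧ G.Adj w p := by
  obtain ⟨hpY, q, hq, hpq⟩ := id hp
  have hne : b ≠ p := fun h => hb.not_yellowv (h ▸ hpY)
  have hbp' : ¬G.Adj b p := hP.not_adj_of_blackv_of_isPairedYellow hb hp
  have hbq' : ¬G.Adj b q := hP.not_adj_of_blackv_of_isPairedYellow hb ⟨hq, p, hpY, hpq.symm⟩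
  obtain ⟨x, z, hbx, hxz, hzp⟩ := hfree.exists_adj_adj_of_not_adj hbp hne hbp'
  refine ⟨z, ?_, hzp⟩
  by_contra hz
  obtain rfl : z = q := hP.eq_of_adj_yellowv hpY hzp.symm hpq hz hq.not_whitev
  rcases hxz with rfl | hxz
  · exact hbq' hbx
  · have hxp : x = p := hP.eq_of_adj_yellowv hq hxz.symm hpq.symm
      (hP.not_whitev_of_adj_blackv hbx hb) hpY.not_whitev
    exact hbp' (hxp ▸ hbx)

end IsPEDS

namespace IsBYWPath

variable {b y w : V}

theorem not_adj_of_ne (h : IsBYWPath G P b y w) (hP : IsPEDS G P) {x : V} (hx : ¬Whitev P x)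
    (hxb : x ≠ b) : ¬G.Adj y x :=
  fun hyx => hxb (hP.eq_of_adj_yellowv h.yellow hyx h.adj_left.symm hx h.black.not_whitev)

theorem adj_or_adj_of_adj_blackv (h : IsBYWPath G P b y w) (hP : IsPEDS G P) (hfree : P5Free G)
    {b' x : V} (hb' : Blackv P b') (hbb' : G.Adj b b') (hb'x : G.Adj b' x) (hxb : x ≠ b) :
    G.Adj b x ∨ G.Adj w x := by
  by_contra! ⟨hbx, hwx⟩
  have hyb' : ¬G.Adj y b' := h.not_adj_of_ne hP hb'.not_whitev hbb'.ne'
  have hyx : ¬G.Adj y x := h.not_adj_of_ne hP (hP.not_whitev_of_adj_blackv hb'x hb') hxb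
  have hwb : ¬G.Adj w b := fun hwb => hP.not_adj_of_blackv_of_whitev h.black h.white hwb.symm
  have hwb' : ¬G.Adj w b' := fun hwb' => hP.not_adj_of_blackv_of_whitev hb' h.white hwb'.symm
  exact hfree.false_of_induced_path h.adj_right.symm h.adj_left.symm hbb' hb'x
    hwb hwb' hwx hyb' hyx hbx

theorem adj_or_adj_of_adj_yellowv (h : IsBYWPath G P b y w) (hP : IsPEDS G P) (hfree : P5Free G)
    {p x : V} (hwp : G.Adj w p) (hpx : G.Adj p x) (hx : ¬Whitev P x) (hxb : x ≠ b) :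
    G.Adj b x ∨ G.Adj w x := by
  by_contra! ⟨hbx, hwx⟩
  have hp : Yellowv P p := hP.yellowv_of_adj_whitev hwp.symm h.white
  have hbp : ¬G.Adj b p := fun hbp =>
    hxb (hP.eq_of_adj_yellowv hp hpx hbp.symm hx h.black.not_whitev)
  have hpb : p ≠ b := fun hpb => h.black.not_yellowv (hpb ▸ hp)
  have hyp : ¬G.Adj y p := h.not_adj_of_ne hP hp.not_whitev hpb
  exact hfree.false_of_induced_path h.adj_left h.adj_right hwp hpx
    (hP.not_adj_of_blackv_of_whitev h.black h.white) hbp hbx hyp (h.not_adj_of_ne hP hx hxb) hwx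

theorem eq_or_adj_of_blackv (h : IsBYWPath G P b y w) (hP : IsPEDS G P) (hfree : P5Free G)
    {v : V} (hvw : G.Reachable v w) (hv : Blackv P v) : v = b ∨ G.Adj b v := by
  have not_adj_w : ∀ u, Blackv P u → ¬G.Adj w u := fun u hu hwu =>
    hP.not_adj_of_blackv_of_whitev hu h.white hwu.symm
  obtain ⟨b', y', hvb', h'⟩ := hP.exists_isBYWPath hfree hvw hv h.white
  have hb' : b' = b ∨ G.Adj b b' := or_iff_not_imp_left.2 fun hne =>
    (h.adj_or_adj_of_adj_yellowv hP hfree h'.adj_right.symm h'.adj_left.symm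
      h'.black.not_whitev hne).resolve_right (not_adj_w b' h'.black)
  rcases hvb' with rfl | hvb'
  · exact hb'
  rcases hb' with rfl | hbb'
  · exact Or.inr hvb'.symm
  · exact or_iff_not_imp_left.2 fun hne =>
      (h.adj_or_adj_of_adj_blackv hP hfree h'.black hbb' hvb'.symm hne).resolve_right
        (not_adj_w v hv)

theorem adj_of_yellowv_adj_blackv (h : IsBYWPath G P b y w) (hP : IsPEDS G P) (hfree : P5Free G)
    {b' x : V} (hb' : Blackv P b') (hx : Yellowv P x) (hbb' : G.Adj b b') (hb'x : G.Adj b' x) :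
    G.Adj w x := by
  have hxb : x ≠ b := fun hxb => h.black.not_yellowv (hxb ▸ hx)
  have hbx : ¬G.Adj b x := fun hbx =>
    hbb'.ne (hP.eq_of_adj_yellowv hx hbx.symm hb'x.symm h.black.not_whitev hb'.not_whitev)
  exact (h.adj_or_adj_of_adj_blackv hP hfree hb' hbb' hb'x hxb).resolve_left hbx

theorem adj_of_adj_isPairedYellow (h : IsBYWPath G P b y w) (hP : IsPEDS G P)
    (hfree : P5Free G) {p q : V} (hwp : G.Adj w p) (hpq : G.Adj p q)
    (hq : IsPairedYellow G P q) : G.Adj w q := by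
  have hqb : q ≠ b := fun hqb => h.black.not_yellowv (hqb ▸ hq.1)
  exact (h.adj_or_adj_of_adj_yellowv hP hfree hwp hpq hq.1.not_whitev hqb).resolve_left
    (hP.not_adj_of_blackv_of_isPairedYellow h.black hq)

theorem pairedNeighbors_subset_or_subset (h : IsBYWPath G P b y w) (hP : IsPEDS G P)
    (hfree : P5Free G) {w' : V} (h' : IsBYWPath G P b y w') :
    G.neighborSet w ∩ {p | IsPairedYellow G P p} ⊆
        G.neighborSet w' ∩ {p | IsPairedYellow G P p} ∨
      G.neighborSet w' ∩ {p | IsPairedYellow G P p} ⊆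
        G.neighborSet w ∩ {p | IsPairedYellow G P p} := by
  by_contra! ⟨hww', hw'w⟩
  obtain ⟨p, ⟨hwp, hp⟩, hp_not⟩ := Set.not_subset.1 hww'
  obtain ⟨p', ⟨hw'p', hp'⟩, hp'_not⟩ := Set.not_subset.1 hw'w
  have hw'p : ¬G.Adj w' p := fun hadj => hp_not ⟨hadj, hp⟩
  have hwp' : ¬G.Adj w p' := fun hadj => hp'_not ⟨hadj, hp'⟩
  have not_adj_y : ∀ q, IsPairedYellow G P q → ¬G.Adj y q := fun q hq =>
    h.not_adj_of_ne hP hq.1.not_whitev fun heq => h.black.not_yellowv (heq ▸ hq.1)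
  have hpp' : ¬G.Adj p p' := fun hpp' =>
    hwp' (h.adj_of_adj_isPairedYellow hP hfree hwp hpp' hp')
  exact hfree.false_of_induced_path hwp.symm h.adj_right.symm h'.adj_right hw'p'
    (fun hadj => not_adj_y p hp hadj.symm) (fun hadj => hw'p hadj.symm) hpp'
    (hP.not_adj_of_whitev h.white h'.white) hwp' (not_adj_y p' hp')

theorem isDominating (h : IsBYWPath G P b y w) (hP : IsPEDS G P) (hfree : P5Free G)
    (hconn : G.Preconnected) (hyW : ∀ v, Whitev P v → G.Adj y v)
    (hwp : ∀ p, IsPairedYellow G P p → G.Adj w p) : IsDominating G {b, y, w} := by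
  have black_dominated : ∀ v, Blackv P v → v = b ∨ G.Adj b v := fun v hv =>
    h.eq_or_adj_of_blackv hP hfree (hconn v w) hv
  intro v
  by_cases hvW : Whitev P v
  · exact Or.inr ⟨y, by simp, hyW v hvW⟩
  rcases blackv_or_yellowv_of_not_whitev hvW with hv | hv
  · exact (black_dominated v hv).imp (by simp +contextual) fun hbv => ⟨b, by simp, hbv⟩
  right
  obtain ⟨u, hvu, hu⟩ := hP.exists_adj_not_whitev hvW
  rcases blackv_or_yellowv_of_not_whitev hu with hu | hu
  · rcases black_dominated u hu with rfl | hbu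
    · exact ⟨u, by simp, hvu.symm⟩
    · exact ⟨w, by simp, h.adj_of_yellowv_adj_blackv hP hfree hu hv hbu hvu.symm⟩
  · exact ⟨w, by simp, hwp v ⟨hv, u, hu, hvu⟩⟩

end IsBYWPath

namespace IsPEDS

theorem whiteNeighbors_subset_or_subset (hP : IsPEDS G P) (hfree : P5Free G)
    (hconn : G.Preconnected) {b y b' y' : V} (hb : Blackv P b) (hy : Yellowv P y) (hby : G.Adj b y)
    (hb' : Blackv P b') (hy' : Yellowv P y') (hby' : G.Adj b' y') :
    G.neighborSet y ∩ {w | Whitev P w} ⊆ G.neighborSet y' ∩ {w | Whitev P w} ∨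
      G.neighborSet y' ∩ {w | Whitev P w} ⊆ G.neighborSet y ∩ {w | Whitev P w} := by
  by_contra! ⟨hyy', hy'y⟩
  obtain ⟨w, ⟨hyw, hw⟩, hw_not⟩ := Set.not_subset.1 hyy'
  obtain ⟨w', ⟨hy'w', hw'⟩, hw'_not⟩ := Set.not_subset.1 hy'y
  have hy'w : ¬G.Adj y' w := fun hadj => hw_not ⟨hadj, hw⟩
  have hyw' : ¬G.Adj y w' := fun hadj => hw'_not ⟨hadj, hw'⟩
  have h : IsBYWPath G P b y w := ⟨hb, hy, hw, hby, hyw⟩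
  rcases h.eq_or_adj_of_blackv hP hfree (hconn b' w) hb' with rfl | hbb'
  · have hyy' : ¬G.Adj y y' :=
      h.not_adj_of_ne hP hy'.not_whitev fun heq => hb.not_yellowv (heq ▸ hy')
    exact hfree.false_of_induced_path hyw.symm hby.symm hby' hy'w'
      (fun hadj => hP.not_adj_of_blackv_of_whitev hb hw hadj.symm) (fun hadj => hy'w hadj.symm)
      (hP.not_adj_of_whitev hw hw') hyy' hyw' (hP.not_adj_of_blackv_of_whitev hb hw')
  · exact hy'w (h.adj_of_yellowv_adj_blackv hP hfree hb' hy' hbb' hby').symm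

theorem exists_yellowv_adj_forall_whitev (hP : IsPEDS G P) (hfree : P5Free G)
    (hconn : G.Preconnected) (hfin : {v | Whitev P v}.Finite) (hB : ∃ v, Blackv P v)
    (hW : ∃ v, Whitev P v) :
    ∃ b y, Blackv P b ∧ Yellowv P y ∧ G.Adj b y ∧ ∀ w, Whitev P w → G.Adj y w := by
  obtain ⟨b₀, hb₀⟩ := hB
  obtain ⟨w₀, hw₀⟩ := hW
  have exists_path := fun w hw => hP.exists_isBYWPath hfree (hconn b₀ w) hb₀ hw
  let S : Set V := {y | Yellowv P y ∧ ∃ b, Blackv P b ∧ G.Adj b y}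
  let N : V → Set V := fun y => G.neighborSet y ∩ {w | Whitev P w}
  have hNfin : (N '' S).Finite :=
    hfin.finite_subsets.subset (Set.image_subset_iff.2 fun _ _ => Set.inter_subset_right)
  obtain ⟨b₁, y₁, -, h₁⟩ := exists_path w₀ hw₀
  obtain ⟨y, ⟨hy, b, hb, hby⟩, hmax⟩ :=
    hNfin.exists_maximalFor' N S ⟨y₁, h₁.yellow, b₁, h₁.black, h₁.adj_left⟩
  refine ⟨b, y, hb, hy, hby, fun w hw => ?_⟩
  obtain ⟨b', y', -, h'⟩ := exists_path w hw
  have hle : N y' ⊆ N y :=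
    (hP.whiteNeighbors_subset_or_subset hfree hconn hb hy hby
      h'.black h'.yellow h'.adj_left).elim
      (hmax ⟨h'.yellow, b', h'.black, h'.adj_left⟩) id
  exact (hle ⟨h'.adj_right, hw⟩).1

theorem exists_whitev_adj_forall_isPairedYellow (hP : IsPEDS G P) (hfree : P5Free G)
    (hconn : G.Preconnected) (hfin : {v | Whitev P v}.Finite) (hW : ∃ v, Whitev P v) {b y : V}
    (hb : Blackv P b) (hy : Yellowv P y) (hby : G.Adj b y)
    (hyW : ∀ w, Whitev P w → G.Adj y w) :
    ∃ w, Whitev P w ∧ ∀ p, IsPairedYellow G P p → G.Adj w p := by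
  have path : ∀ w, Whitev P w → IsBYWPath G P b y w := fun w hw => ⟨hb, hy, hw, hby, hyW w hw⟩
  obtain ⟨w, hw, hmax⟩ := hfin.exists_maximalFor
    (fun w => G.neighborSet w ∩ {p | IsPairedYellow G P p}) _ hW
  refine ⟨w, hw, fun p hp => ?_⟩
  obtain ⟨w', hw', hw'p⟩ := hP.exists_whitev_adj_of_isPairedYellow hfree (hconn b p) hb hp
  have hle := ((path w hw).pairedNeighbors_subset_or_subset hP hfree (path w' hw')).elim
    (hmax hw') id
  exact (hle ⟨hw'p, hp⟩).1

end IsPEDS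

theorem proper_peds_dominating_p3_general (hconn : G.Preconnected) (hfree : P5Free G)
    (hP : IsPEDS G P) (hfin : {v | Whitev P v}.Finite) (hB : ∃ v, Blackv P v)
    (hW : ∃ v, Whitev P v) :
    ∃ b y w : V, G.Adj b y ∧ G.Adj y w ∧ ¬G.Adj b w ∧ b ≠ w ∧ IsDominating G {b, y, w} ∧
      Blackv P b ∧ Yellowv P y ∧ Whitev P w := by
  obtain ⟨b, y, hb, hy, hby, hyW⟩ :=
    hP.exists_yellowv_adj_forall_whitev hfree hconn hfin hB hW
  obtain ⟨w, hw, hwp⟩ :=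
    hP.exists_whitev_adj_forall_isPairedYellow hfree hconn hfin hW hb hy hby hyW
  have h : IsBYWPath G P b y w := ⟨hb, hy, hw, hby, hyW w hw⟩
  exact ⟨b, y, w, hby, hyW w hw, hP.not_adj_of_blackv_of_whitev hb hw,
    fun hbw => hb.not_whitev (hbw ▸ hw), h.isDominating hP hfree hconn hyW hwp, hb, hy, hw⟩

end

/-- If a connected `P₅`-free graph admits a proper perfect edge dominating set
`P` (one whose associated color classes `B`, `Y`, `W` are all nonempty), then it
has a dominating induced `P₃` `v₁v₂v₃` whose triple of colors is one of
`(B,B,Y), (Y,B,B), (B,Y,W), (W,Y,B), (Y,B,Y), (W,Y,W), (Y,W,Y)`. -/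
theorem proper_peds_dominating_p3 {V : Type*} [Fintype V] (G : SimpleGraph V)
    (hconn : G.Connected) (hfree : P5Free G) (P : Set (Sym2 V))
    (hP : IsPEDS G P) (hB : ∃ v, Blackv P v) (hY : ∃ v, Yellowv P v)
    (hW : ∃ v, Whitev P v) :
    ∃ v₁ v₂ v₃ : V, G.Adj v₁ v₂ ∧ G.Adj v₂ v₃ ∧ ¬ G.Adj v₁ v₃ ∧ v₁ ≠ v₃ ∧
      IsDominating G {v₁, v₂, v₃} ∧
      ((Blackv P v₁ ∧ Blackv P v₂ ∧ Yellowv P v₃) ∨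
       (Yellowv P v₁ ∧ Blackv P v₂ ∧ Blackv P v₃) ∨
       (Blackv P v₁ ∧ Yellowv P v₂ ∧ Whitev P v₃) ∨
       (Whitev P v₁ ∧ Yellowv P v₂ ∧ Blackv P v₃) ∨
       (Yellowv P v₁ ∧ Blackv P v₂ ∧ Yellowv P v₃) ∨
       (Whitev P v₁ ∧ Yellowv P v₂ ∧ Whitev P v₃) ∨
       (Yellowv P v₁ ∧ Whitev P v₂ ∧ Yellowv P v₃)) := by
  obtain ⟨b, y, w, hby, hyw, hbw, hne, hdom, hcol⟩ :=
    proper_peds_dominating_p3_general hconn.preconnected hfree hP (Set.toFinite _) hB hW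
  exact ⟨b, y, w, hby, hyw, hbw, hne, hdom, Or.inr (Or.inr (Or.inl hcol))⟩
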